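/- arXiv:1708.05218 — 2 statements merged into one kernel-verified Lean document; each statement's English description precedes it below -/
import Mathlib

section
/- Let X₁ and X₂ be real Banach spaces and let X = X₁ × X₂ be their product with the supremum norm ‖(x₁, x₂)‖ = max(‖x₁‖, ‖x₂‖). Let B₁ ⊂ X₁ and B₂ ⊂ X₂ be nonempty bounded SCD sets. Then the set B₁ × B₂ ⊂ X (which equals the Minkowski sum of B₁ × {0} and {0} × B₂) is SCD in X. -/
open Bornology Set Pointwise

variable {X : Type*} [NormedAddCommGroup X] [NormedSpace ℝ X]

/-- The sliceSet of `A` given by the functional `f` and `ε > 0`. -/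
noncomputable def sliceSet (A : Set X) (f : X →L[ℝ] ℝ) (ε : ℝ) : Set X :=
  {x ∈ A | sSup (f '' A) - ε < f x}

/-- `S` is a sliceSet of `A`: a nonempty set of the form `sliceSet A f ε` with `f ≠ 0`, `ε > 0`. -/
def IsSlice (A S : Set X) : Prop :=
  S.Nonempty ∧ ∃ f : X →L[ℝ] ℝ, f ≠ 0 ∧ ∃ ε : ℝ, 0 < ε ∧ S = sliceSet A f ε

/-- A sequence of subsets of `A` is determining if every set `B` meeting all of them
has `A` inside the closed convex hull of `B`. -/
def Determining (A : Set X) (V : ℕ → Set X) : Prop :=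
  ∀ B : Set X, (∀ n, (B ∩ V n).Nonempty) → A ⊆ closure (convexHull ℝ B)

/-- A bounded set is slicely countably determined if it has a determining sequence of slices. -/
def IsSCD (A : Set X) : Prop :=
  ∃ V : ℕ → Set X, (∀ n, IsSlice A (V n)) ∧ Determining A V

/-- The Daugavet property: every rank-one operator `x ↦ f x • y` satisfies the
Daugavet equation `‖Id + T‖ = 1 + ‖T‖`. -/
def DaugavetProperty (X : Type*) [NormedAddCommGroup X] [NormedSpace ℝ X] : Prop :=
  ∀ (f : X →L[ℝ] ℝ) (y : X),
    ‖ContinuousLinearMap.id ℝ X + f.smulRight y‖ = 1 + ‖f.smulRight y‖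


/-!
By Hahn–Banach, a sequence is determining for `A` exactly when every open half-space meeting `A`
contains one of its members. A functional on `X × Y` is a sum of functionals of the two
coordinates, so the products `V m ×ˢ U n` of two determining sequences are determining for the
product set. Such a product of slices need not be a slice, but it contains one: rescale both slices
to width `1` and take the slice of width `1` given by the sum of the two functionals.
-/

section

variable {Y : Type*} [NormedAddCommGroup Y] [NormedSpace ℝ Y]

theorem determining_iff_forall_exists_subset_halfSpace {A : Set X} {V : ℕ → Set X} :
    Determining A V ↔
      ∀ (f : X →L[ℝ] ℝ) (c : ℝ), ∀ a ∈ A, c < f a → ∃ n, V n ⊆ {x | c < f x} := by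
  constructor
  · intro hV f c a ha hca
    by_contra! hfc
    choose b hbV hbc using fun n => not_subset.mp (hfc n)
    simp only [mem_ofPred_eq, not_lt] at hbc
    have hull_subset : closure (convexHull ℝ (range b)) ⊆ {x | f x ≤ c} :=
      closure_minimal
        (convexHull_min (range_subset_iff.mpr hbc) (convex_halfSpace_le f.isLinear c))
        (isClosed_le f.continuous continuous_const)
    have ha_hull := hV (range b) (fun n => ⟨b n, mem_range_self n, hbV n⟩) ha
    exact hca.not_ge (hull_subset ha_hull)
  · intro h B hB a ha
    by_contra ha_hull
    obtain ⟨f, c, hBc, hca⟩ := geometric_hahn_banach_closed_point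
      (convex_convexHull ℝ B).closure isClosed_closure ha_hull
    obtain ⟨n, hn⟩ := h f c a ha hca
    obtain ⟨b, hbB, hbV⟩ := hB n
    exact (hBc b (subset_closure (subset_convexHull ℝ B hbB))).not_gt (hn hbV)

theorem Determining.mono {A : Set X} {V W : ℕ → Set X} (hV : Determining A V)
    (hWV : ∀ n, W n ⊆ V n) : Determining A W :=
  fun B hB => hV B fun n => (hB n).mono (inter_subset_inter_right B (hWV n))

theorem Determining.prod {A : Set X} {B : Set Y} {V : ℕ → Set X} {U : ℕ → Set Y}
    (hV : Determining A V) (hU : Determining B U) :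
    Determining (A ×ˢ B) fun k => V k.unpair.1 ×ˢ U k.unpair.2 := by
  rw [determining_iff_forall_exists_subset_halfSpace] at hV hU ⊢
  rintro f c ⟨a, b⟩ ⟨ha, hb⟩ hc
  set f₁ := f.comp (.inl ℝ X Y)
  set f₂ := f.comp (.inr ℝ X Y)
  have f_apply (x : X) (y : Y) : f (x, y) = f₁ x + f₂ y := by simp [f₁, f₂, ← map_add]
  obtain ⟨c₁, hcc₁, hc₁⟩ : ∃ c₁, c - f₂ b < c₁ ∧ c₁ < f₁ a :=
    exists_between (by linarith [f_apply a b])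
  obtain ⟨m, hm⟩ := hV f₁ c₁ a ha hc₁
  obtain ⟨n, hn⟩ := hU f₂ (c - c₁) b hb (by linarith)
  refine ⟨Nat.pair m n, ?_⟩
  rw [Nat.unpair_pair]
  rintro ⟨x, y⟩ ⟨hx, hy⟩
  calc c = c₁ + (c - c₁) := by ring
    _ < f₁ x + f₂ y := add_lt_add (hm hx) (hn hy)
    _ = f (x, y) := (f_apply x y).symm

theorem bddAbove_image_of_isBounded {A : Set X} (hA : IsBounded A) (f : X →L[ℝ] ℝ) :
    BddAbove (f '' A) :=
  (f.lipschitz.isBounded_image hA).bddAbove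

theorem sSup_image_coprod_prod {A : Set X} {B : Set Y} (hA : A.Nonempty) (hAb : IsBounded A)
    (hB : B.Nonempty) (hBb : IsBounded B) (f : X →L[ℝ] ℝ) (g : Y →L[ℝ] ℝ) :
    sSup (f.coprod g '' A ×ˢ B) = sSup (f '' A) + sSup (g '' B) := by
  rw [← csSup_add (hA.image f) (bddAbove_image_of_isBounded hAb f) (hB.image g)
    (bddAbove_image_of_isBounded hBb g), ← image2_add, image2_image_left, image2_image_right,
    ← image_prod]
  rfl

theorem sliceSet_coprod_prod_subset {A : Set X} {B : Set Y} (hAb : IsBounded A)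
    (hBb : IsBounded B) (f : X →L[ℝ] ℝ) (g : Y →L[ℝ] ℝ) (ε : ℝ) :
    sliceSet (A ×ˢ B) (f.coprod g) ε ⊆ sliceSet A f ε ×ˢ sliceSet B g ε := by
  rintro ⟨x, y⟩ ⟨⟨hx, hy⟩, hxy⟩
  rw [sSup_image_coprod_prod ⟨x, hx⟩ hAb ⟨y, hy⟩ hBb, ContinuousLinearMap.coprod_apply] at hxy
  have hfx := le_csSup (bddAbove_image_of_isBounded hAb f) (mem_image_of_mem f hx)
  have hgy := le_csSup (bddAbove_image_of_isBounded hBb g) (mem_image_of_mem g hy)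
  exact ⟨⟨hx, by linarith⟩, ⟨hy, by linarith⟩⟩

theorem sliceSet_nonempty {A : Set X} (hA : A.Nonempty) (f : X →L[ℝ] ℝ) {ε : ℝ} (hε : 0 < ε) :
    (sliceSet A f ε).Nonempty := by
  obtain ⟨_, ⟨a, ha, rfl⟩, hfa⟩ := exists_lt_of_lt_csSup (hA.image f) (sub_lt_self _ hε)
  exact ⟨a, ha, hfa⟩

theorem sliceSet_smul (A : Set X) (f : X →L[ℝ] ℝ) (ε : ℝ) {c : ℝ} (hc : 0 < c) :
    sliceSet A (c • f) (c * ε) = sliceSet A f ε := by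
  have sSup_smul_image : sSup ((c • f) '' A) = c * sSup (f '' A) := by
    rw [← smul_eq_mul, ← Real.sSup_smul_of_nonneg hc.le, ← image_smul, image_image]
    rfl
  ext x
  rw [sliceSet, sSup_smul_image, ← mul_sub]
  exact and_congr_right fun _ => mul_lt_mul_iff_right₀ hc

theorem IsSlice.subset {A S : Set X} (hS : IsSlice A S) : S ⊆ A := by
  obtain ⟨-, f, -, ε, -, rfl⟩ := hS
  exact fun x hx => hx.1

theorem IsSlice.exists_eq_sliceSet_one {A S : Set X} (hS : IsSlice A S) :
    ∃ f : X →L[ℝ] ℝ, f ≠ 0 ∧ S = sliceSet A f 1 := by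
  obtain ⟨-, f, hf, ε, hε, rfl⟩ := hS
  refine ⟨ε⁻¹ • f, smul_ne_zero (inv_ne_zero hε.ne') hf, ?_⟩
  rw [← sliceSet_smul A f ε (inv_pos.mpr hε), inv_mul_cancel₀ hε.ne']

theorem IsSlice.exists_subset_prod {A S : Set X} {B T : Set Y} (hS : IsSlice A S)
    (hT : IsSlice B T) (hAb : IsBounded A) (hBb : IsBounded B) :
    ∃ R, IsSlice (A ×ˢ B) R ∧ R ⊆ S ×ˢ T := by
  have hAB : (A ×ˢ B).Nonempty := (hS.1.prod hT.1).mono (prod_mono hS.subset hT.subset)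
  obtain ⟨f, hf, rfl⟩ := hS.exists_eq_sliceSet_one
  obtain ⟨g, -, rfl⟩ := hT.exists_eq_sliceSet_one
  have coprod_ne_zero : f.coprod g ≠ 0 := fun h =>
    hf (by rw [← ContinuousLinearMap.coprod_comp_inl f g, h, ContinuousLinearMap.zero_comp])
  exact ⟨sliceSet (A ×ˢ B) (f.coprod g) 1,
    ⟨sliceSet_nonempty hAB _ one_pos, f.coprod g, coprod_ne_zero, 1, one_pos, rfl⟩,
    sliceSet_coprod_prod_subset hAb hBb f g 1⟩

theorem prod_isSCD_general {A : Set X} {B : Set Y} (hAb : IsBounded A) (hA : IsSCD A)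
    (hBb : IsBounded B) (hB : IsSCD B) : IsSCD (A ×ˢ B) := by
  obtain ⟨V, hVslice, hV⟩ := hA
  obtain ⟨U, hUslice, hU⟩ := hB
  choose W hWslice hWsub using fun k : ℕ =>
    (hVslice k.unpair.1).exists_subset_prod (hUslice k.unpair.2) hAb hBb
  exact ⟨W, hWslice, (hV.prod hU).mono hWsub⟩

end

theorem prod_isSCD
    {X₁ : Type*} [NormedAddCommGroup X₁] [NormedSpace ℝ X₁] [CompleteSpace X₁]
    {X₂ : Type*} [NormedAddCommGroup X₂] [NormedSpace ℝ X₂] [CompleteSpace X₂]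
    (B₁ : Set X₁) (B₂ : Set X₂)
    (h₁ : B₁.Nonempty) (h₁b : IsBounded B₁) (h₁s : IsSCD B₁)
    (h₂ : B₂.Nonempty) (h₂b : IsBounded B₂) (h₂s : IsSCD B₂) :
    IsSCD (B₁ ×ˢ B₂ : Set (X₁ × X₂)) :=
  prod_isSCD_general h₁b h₁s h₂b h₂s
end

section
/- Let X be a real Banach space with the Daugavet property. Then there exists a bounded SCD set B ⊂ X such that the union B ∪ (−B) is not SCD. -/
open Bornology Set Pointwise

variable {X : Type*} [NormedAddCommGroup X] [NormedSpace ℝ X]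

open Metric Filter Submodule
open scoped Topology

/-!
In a Daugavet space the points `y` of the unit ball that are almost `ℓ₁`-orthogonal to a given
finite-dimensional subspace have the whole ball as their closed convex hull. Starting from a unit
vector `z`, this yields finite blocks `Y 0, Y 1, …` such that each `Y k` almost norms all earlier
points and their negatives, while any selection of one point per block is almost `ℓ₁`-orthogonal to
everything before it.

Translate each `y` along `z` onto the paraboloid `f = ‖·‖²` over `X ⧸ ℝ ∙ z`, where `f z = 1`.
If the quotient norms on the blocks form a discrete set in `(0, 1)`, strict convexity of `t ↦ t²`
makes every lifted point a slice by itself, so the countable set `B` of lifted points is SCD.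
In `B ∪ -B`, however, either sign of `G z` can be compensated by passing to `-B`, so every slice
meets `±`lifts of all late blocks. A sequence of slices is therefore met by a selection from an
arbitrarily late subsequence of blocks, and the closed span of such a selection together with `z`
omits the earliest points.
-/

section Slices

lemma apply_le_norm (f : X →L[ℝ] ℝ) {x : X} (hx : ‖x‖ ≤ 1) : f x ≤ ‖f‖ :=
  (le_abs_self _).trans (f.unit_le_opNorm x hx)

lemma sSup_image_closedBall_eq_norm (f : X →L[ℝ] ℝ) : sSup (f '' closedBall 0 1) = ‖f‖ := by
  refine csSup_eq_of_forall_le_of_forall_lt_exists_gt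
    ((nonempty_closedBall.2 zero_le_one).image f) ?_ fun c hc ↦ ?_
  · rintro _ ⟨x, hx, rfl⟩
    exact apply_le_norm f (mem_closedBall_zero_iff.1 hx)
  · obtain ⟨x, hx, hcx⟩ := f.exists_lt_apply_of_lt_opNorm hc
    rcases lt_abs.1 hcx with hpos | hneg
    · exact ⟨f x, mem_image_of_mem f (by simpa using hx.le), hpos⟩
    · exact ⟨f (-x), mem_image_of_mem f (by simpa using hx.le), by simpa using hneg⟩

lemma isSlice_sliceSet {A : Set X} (hA : A.Nonempty) {f : X →L[ℝ] ℝ} (hf : f ≠ 0) {ε : ℝ}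
    (hε : 0 < ε) : IsSlice A (sliceSet A f ε) := by
  obtain ⟨_, ⟨x, hx, rfl⟩, hlt⟩ :=
    exists_lt_of_lt_csSup (hA.image f) (sub_lt_self (sSup (f '' A)) hε)
  exact ⟨⟨x, hx, hlt⟩, f, hf, ε, hε, rfl⟩

lemma isSlice_closedBall_iff {S : Set X} :
    IsSlice (closedBall 0 1) S ↔
      ∃ f : X →L[ℝ] ℝ, f ≠ 0 ∧ ∃ c < ‖f‖, S = {x ∈ closedBall 0 1 | c < f x} := by
  constructor
  · rintro ⟨-, f, hf, ε, hε, rfl⟩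
    exact ⟨f, hf, ‖f‖ - ε, by linarith, by rw [sliceSet, sSup_image_closedBall_eq_norm]⟩
  · rintro ⟨f, hf, c, hc, rfl⟩
    have hslice :=
      isSlice_sliceSet (nonempty_closedBall (x := (0 : X)).2 zero_le_one) hf (sub_pos.2 hc)
    rwa [sliceSet, sSup_image_closedBall_eq_norm, sub_sub_cancel] at hslice

lemma subset_closure_convexHull_of_forall_isSlice [Nontrivial X] {A D : Set X} (hA : IsBounded A)
    (hD : ∀ S, IsSlice A S → (D ∩ S).Nonempty) : A ⊆ closure (convexHull ℝ D) := by
  intro x hx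
  by_contra hxD
  obtain ⟨f, u, hfu, hux⟩ :=
    geometric_hahn_banach_closed_point (convex_convexHull ℝ D).closure isClosed_closure hxD
  replace hfu : ∀ d ∈ D, f d < u := fun d hd ↦ hfu d (subset_closure (subset_convexHull ℝ D hd))
  have hf : f ≠ 0 := by
    rintro rfl
    obtain ⟨g, hg⟩ := exists_ne (0 : X →L[ℝ] ℝ)
    obtain ⟨d, hd, -⟩ := hD _ (isSlice_sliceSet ⟨x, hx⟩ hg one_pos)
    exact (hfu d hd).asymm hux
  have hxsup : f x ≤ sSup (f '' A) :=
    le_csSup (f.lipschitz.isBounded_image hA).bddAbove (mem_image_of_mem f hx)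
  obtain ⟨d, hd, -, hlt⟩ :=
    hD _ (isSlice_sliceSet ⟨x, hx⟩ hf (sub_pos.2 (hux.trans_le hxsup)))
  linarith [hfu d hd]

lemma exists_finite_subset_forall_le_of_mem_closure_convexHull {D : Set X} {x : X}
    (hx : x ∈ closure (convexHull ℝ D)) {δ : ℝ} (hδ : 0 < δ) :
    ∃ W ⊆ D, W.Finite ∧ ∀ G : X →L[ℝ] ℝ, ∃ y ∈ W, G x - δ * ‖G‖ ≤ G y := by
  obtain ⟨w, hw, hxw⟩ := Metric.mem_closure_iff.1 hx δ hδ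
  rw [convexHull_eq_union_convexHull_finite_subsets] at hw
  obtain ⟨W, hWD, hwW⟩ := mem_iUnion₂.1 hw
  refine ⟨W, hWD, W.finite_toSet, fun G ↦ ?_⟩
  obtain ⟨y, hy, hwy⟩ :=
    (G.toLinearMap.convexOn convex_univ).exists_ge_of_mem_convexHull (subset_univ _) hwW
  refine ⟨y, hy, le_trans ?_ hwy⟩
  calc G x - δ * ‖G‖ ≤ G x - ‖G‖ * ‖x - w‖ := by
        rw [mul_comm, ← dist_eq_norm]; gcongr
    _ ≤ G x - G (x - w) := by gcongr; exact (le_abs_self _).trans (G.le_opNorm _)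
    _ = G w := by simp

lemma exists_finite_subset_forall_le_of_subset_closure_convexHull {D T : Set X} (hT : T.Finite)
    (hTD : T ⊆ closure (convexHull ℝ D)) {δ : ℝ} (hδ : 0 < δ) :
    ∃ W ⊆ D, W.Finite ∧ ∀ t ∈ T, ∀ G : X →L[ℝ] ℝ, ∃ y ∈ W, G t - δ * ‖G‖ ≤ G y := by
  choose! W hWD hW hle using fun t (ht : t ∈ T) ↦
    exists_finite_subset_forall_le_of_mem_closure_convexHull (hTD ht) hδ
  refine ⟨⋃ t ∈ T, W t, iUnion₂_subset hWD, hT.biUnion hW, fun t ht G ↦ ?_⟩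
  obtain ⟨y, hy, hGy⟩ := hle t ht G
  exact ⟨y, mem_biUnion ht hy, hGy⟩

lemma isSCD_of_forall_isSlice_singleton {A : Set X} (hA : A.Nonempty) (hcount : A.Countable)
    (hslice : ∀ a ∈ A, IsSlice A {a}) : IsSCD A := by
  obtain ⟨a, rfl⟩ := hcount.exists_eq_range hA
  refine ⟨fun n ↦ {a n}, fun n ↦ hslice _ (mem_range_self n), fun B hB ↦ ?_⟩
  rintro _ ⟨n, rfl⟩
  exact subset_closure (subset_convexHull ℝ B (inter_singleton_nonempty.1 (hB n)))

lemma not_isSCD_of_forall_frequently_inter_nonempty {A : Set X} {D : ℕ → Set X}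
    (hslice : ∀ S, IsSlice A S → ∃ᶠ k in atTop, (D k ∩ S).Nonempty)
    (hD : ∀ φ : ℕ → ℕ, StrictMono φ → ∀ d : ℕ → X, (∀ n, d n ∈ D (φ n)) →
      ¬ A ⊆ closure (convexHull ℝ (range d))) :
    ¬ IsSCD A := by
  rintro ⟨V, hV, hdet⟩
  obtain ⟨φ, hφ, hφV⟩ := extraction_forall_of_frequently fun n ↦ hslice _ (hV n)
  choose d hdD hdV using hφV
  exact hD φ hφ d hdD (hdet _ fun n ↦ ⟨d n, mem_range_self n, hdV n⟩)

variable {E : Type*} [SeminormedAddCommGroup E] [NormedSpace ℝ E]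

-- With `r = ‖q a‖` and `g` norming `q a`, the functional `2r (g ∘ q) - f` takes on `b ∈ A` a value
-- of at most `2r‖q b‖ - ‖q b‖² = r² - (‖q b‖ - r)²`, with equality at `a`.
lemma isSlice_singleton_of_eq_norm_sq (f : X →L[ℝ] ℝ) (q : X →L[ℝ] E) {A : Set X}
    (hA : ∀ b ∈ A, f b = ‖q b‖ ^ 2) {a : X} (ha : a ∈ A) (hqa : 0 < ‖q a‖) {ε : ℝ} (hε : 0 < ε)
    (hisol : ∀ b ∈ A, |‖q b‖ - ‖q a‖| < ε → b = a) : IsSlice A {a} := by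
  obtain ⟨g, hg, hga⟩ := exists_dual_vector'' ℝ (q a)
  let ψ : X →L[ℝ] ℝ := (2 * ‖q a‖) • g.comp q - f
  have hψ_le : ∀ b ∈ A, ψ b ≤ ‖q a‖ ^ 2 - (‖q b‖ - ‖q a‖) ^ 2 := by
    intro b hb
    have hgb : g (q b) ≤ ‖q b‖ := by
      simpa using (le_abs_self _).trans (g.le_of_opNorm_le hg (q b))
    calc ψ b = 2 * ‖q a‖ * g (q b) - ‖q b‖ ^ 2 := by simp [ψ, hA b hb]
      _ ≤ 2 * ‖q a‖ * ‖q b‖ - ‖q b‖ ^ 2 := by gcongr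
      _ = ‖q a‖ ^ 2 - (‖q b‖ - ‖q a‖) ^ 2 := by ring
  have hψa : ψ a = ‖q a‖ ^ 2 := by
    calc ψ a = 2 * ‖q a‖ * g (q a) - ‖q a‖ ^ 2 := by simp [ψ, hA a ha]
      _ = ‖q a‖ ^ 2 := by rw [hga, RCLike.ofReal_real_eq_id, id]; ring
  have hψ : ψ ≠ 0 := by
    intro h
    rw [h, zero_apply] at hψa
    exact (pow_pos hqa 2).ne hψa
  have hsup : sSup (ψ '' A) = ‖q a‖ ^ 2 := by
    refine IsGreatest.csSup_eq ⟨⟨a, ha, hψa⟩, ?_⟩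
    rintro _ ⟨b, hb, rfl⟩
    linarith [hψ_le b hb, sq_nonneg (‖q b‖ - ‖q a‖)]
  have hmem : a ∈ sliceSet A ψ (ε ^ 2) :=
    ⟨ha, by rw [hsup, hψa]; exact sub_lt_self _ (pow_pos hε 2)⟩
  have hunique : ∀ b ∈ sliceSet A ψ (ε ^ 2), b = a := by
    rintro b ⟨hb, hlt⟩
    rw [hsup] at hlt
    exact hisol b hb (abs_lt_of_sq_lt_sq (by linarith [hψ_le b hb]) hε.le)
  exact ⟨singleton_nonempty a, ψ, hψ, ε ^ 2, pow_pos hε 2,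
    (eq_singleton_iff_unique_mem.2 ⟨hmem, hunique⟩).symm⟩

end Slices

section AlmostL1Orthogonal

/-- `y` is `ℓ₁`-orthogonal to `F` up to `η`: the norm of `F ⊕ ℝ y` dominates `1 - η` times the
norm of the `ℓ₁`-sum of `F` and `ℝ`. -/
def AlmostL1Orthogonal (F : Submodule ℝ X) (η : ℝ) (y : X) : Prop :=
  ∀ v ∈ F, ∀ a : ℝ, (1 - η) * (‖v‖ + |a|) ≤ ‖v + a • y‖

lemma one_sub_mul_add_le_norm_smul_add_smul {x y : X} (hx : ‖x‖ ≤ 1) (hy : ‖y‖ ≤ 1) {η : ℝ}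
    (hη : 0 ≤ η) (hxy : 2 - η ≤ ‖x + y‖) {s a : ℝ} (hs : 0 ≤ s) (ha : 0 ≤ a) :
    (1 - η) * (s + a) ≤ ‖s • x + a • y‖ := by
  wlog has : a ≤ s generalizing x y s a
  · rw [add_comm s, add_comm (s • x)]
    exact this hy hx (by rwa [add_comm]) ha hs (le_of_not_ge has)
  have htriangle : s * ‖x + y‖ ≤ ‖s • x + a • y‖ + (s - a) * ‖y‖ := by
    calc s * ‖x + y‖ = ‖s • (x + y)‖ := by rw [norm_smul, Real.norm_of_nonneg hs]
      _ = ‖(s • x + a • y) + (s - a) • y‖ := by congr 1; module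
      _ ≤ ‖s • x + a • y‖ + ‖(s - a) • y‖ := norm_add_le _ _
      _ = ‖s • x + a • y‖ + (s - a) * ‖y‖ := by
        rw [norm_smul, Real.norm_of_nonneg (sub_nonneg.2 has)]
  have hleft : s * (2 - η) ≤ s * ‖x + y‖ := by gcongr
  have hright : (s - a) * ‖y‖ ≤ s - a := mul_le_of_le_one_right (sub_nonneg.2 has) hy
  linarith [mul_nonneg hη ha]

lemma exists_norm_eq_one_and_eq_norm_smul {F : Submodule ℝ X} (hF : F ≠ ⊥) {v : X} (hv : v ∈ F) :
    ∃ u ∈ F, ‖u‖ = 1 ∧ v = ‖v‖ • u := by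
  rcases eq_or_ne v 0 with rfl | hv0
  · obtain ⟨w, hw, hw0⟩ := exists_mem_ne_zero_of_ne_bot hF
    exact ⟨‖w‖⁻¹ • w, F.smul_mem _ hw, norm_smul_inv_norm (𝕜 := ℝ) hw0, by simp⟩
  · exact ⟨‖v‖⁻¹ • v, F.smul_mem _ hv, norm_smul_inv_norm (𝕜 := ℝ) hv0,
      (smul_inv_smul₀ (norm_ne_zero_iff.2 hv0) v).symm⟩

lemma almostL1Orthogonal_of_forall_norm_eq_one {F : Submodule ℝ X} (hF : F ≠ ⊥) {η : ℝ}
    (hη : 0 ≤ η) {y : X} (hy : ‖y‖ ≤ 1) (hsphere : ∀ u ∈ F, ‖u‖ = 1 → 2 - η ≤ ‖u + y‖) :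
    AlmostL1Orthogonal F η y := by
  intro v hv a
  wlog ha : 0 ≤ a generalizing v a
  · have hneg := this (-v) (F.neg_mem hv) (-a) (by linarith)
    rwa [norm_neg, abs_neg, neg_smul, ← neg_add, norm_neg] at hneg
  obtain ⟨u, hu, hu1, hvu⟩ := exists_norm_eq_one_and_eq_norm_smul hF hv
  rw [abs_of_nonneg ha, hvu, norm_smul, norm_norm, hu1, mul_one]
  exact one_sub_mul_add_le_norm_smul_add_smul hu1.le hy hη (hsphere u hu hu1) (norm_nonneg v) ha

lemma AlmostL1Orthogonal.one_sub_mul_norm_le {F : Submodule ℝ X} {η : ℝ} {y : X}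
    (h : AlmostL1Orthogonal F η y) (hη : η ≤ 1) {v : X} (hv : v ∈ F) (a : ℝ) :
    (1 - η) * ‖v‖ ≤ ‖v + a • y‖ :=
  (mul_le_mul_of_nonneg_left (le_add_of_nonneg_right (abs_nonneg a)) (sub_nonneg.2 hη)).trans
    (h v hv a)

lemma AlmostL1Orthogonal.one_sub_le_norm_mkQ {F S : Submodule ℝ X} {η : ℝ} {y : X}
    (h : AlmostL1Orthogonal F η y) (hη : η ≤ 1) (hSF : S ≤ F) : 1 - η ≤ ‖S.mkQ y‖ := by
  refine QuotientAddGroup.le_norm_iff.2 fun m hm ↦ ?_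
  have hmem : m - y ∈ F := hSF ((Submodule.Quotient.eq S).1 hm)
  have hle := h (m - y) hmem 1
  rw [one_smul, sub_add_cancel, abs_one] at hle
  nlinarith [norm_nonneg (m - y)]

end AlmostL1Orthogonal

section AlmostExtremal

variable {f g : X →L[ℝ] ℝ} {v y : X} {e : ℝ}

lemma lt_apply_of_lt_add_smul_apply (hg : ‖g‖ ≤ 1) (hv : ‖v‖ ≤ 1) (hy : ‖y‖ ≤ 1) (hef : e ≤ ‖f‖)
    (hgv : 0 ≤ g v) (hlt : 1 + ‖f‖ - e < (g + g v • f) y) : ‖f‖ - e < f y := by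
  have hgv1 : g v ≤ 1 := (apply_le_norm g hv).trans hg
  have hgy1 : g y ≤ 1 := (apply_le_norm g hy).trans hg
  have hprod : ‖f‖ - e < g v * f y := by
    have hsum : 1 + ‖f‖ - e < g y + g v * f y := by simpa using hlt
    linarith
  have hfy : 0 < f y := pos_of_mul_pos_right (by linarith) hgv
  exact hprod.trans_le (mul_le_of_le_one_left hfy.le hgv1)

lemma norm_mul_two_sub_norm_add_lt (hg : ‖g‖ ≤ 1) (hv : ‖v‖ ≤ 1) (hy : ‖y‖ ≤ 1) (hgv : 0 ≤ g v)
    (hlt : 1 + ‖f‖ - e < (g + g v • f) y) : ‖f‖ * (2 - ‖v + y‖) < (1 + ‖f‖) * e := by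
  have hgv1 : g v ≤ 1 := (apply_le_norm g hv).trans hg
  have hgy1 : g y ≤ 1 := (apply_le_norm g hy).trans hg
  have hsum : 1 + ‖f‖ - e < g y + g v * ‖f‖ := by
    have hsum' : 1 + ‖f‖ - e < g y + g v * f y := by simpa using hlt
    linarith [mul_le_mul_of_nonneg_left (apply_le_norm f hy) hgv]
  have hgy : 1 - e ≤ g y := by linarith [mul_le_of_le_one_left (norm_nonneg f) hgv1]
  have hvy : g v + g y ≤ ‖v + y‖ := by
    simpa using (le_abs_self _).trans (g.le_of_opNorm_le hg (v + y))
  linarith [mul_le_mul_of_nonneg_left hvy (norm_nonneg f),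
    mul_le_mul_of_nonneg_left hgy (norm_nonneg f)]

end AlmostExtremal

namespace DaugavetProperty

lemma nontrivial (h : DaugavetProperty X) : Nontrivial X := by
  by_contra htrivial
  rw [not_nontrivial_iff_subsingleton] at htrivial
  simpa [Subsingleton.elim (ContinuousLinearMap.id ℝ X) 0] using h 0 0

lemma exists_norm_le_one_lt_norm_add_smul (h : DaugavetProperty X) (f : X →L[ℝ] ℝ) {v : X}
    (hv : ‖v‖ = 1) {r : ℝ} (hr : r < 1 + ‖f‖) :
    ∃ g : X →L[ℝ] ℝ, ‖g‖ ≤ 1 ∧ 0 ≤ g v ∧ r < ‖g + g v • f‖ := by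
  have hnorm : r < ‖ContinuousLinearMap.id ℝ X + f.smulRight v‖ := by
    rwa [h f v, ContinuousLinearMap.norm_smulRight_apply, hv, mul_one]
  obtain ⟨x, hx, hrx⟩ := ContinuousLinearMap.exists_lt_apply_of_lt_opNorm _ hnorm
  obtain ⟨g, hg, hgx⟩ := exists_dual_vector'' ℝ (x + f x • v)
  have hlt : r < ‖g + g v • f‖ := by
    calc r < ‖x + f x • v‖ := hrx
      _ = (g + g v • f) x := by exact hgx.symm.trans (by simp [mul_comm])
      _ ≤ ‖g + g v • f‖ := apply_le_norm _ hx.le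
  rcases le_total 0 (g v) with hgv | hgv
  · exact ⟨g, hg, hgv, hlt⟩
  · refine ⟨-g, by rwa [norm_neg], by simpa using hgv, ?_⟩
    have hneg : -g + (-g) v • f = -(g + g v • f) := by
      ext w
      simp only [add_apply, neg_apply, smul_apply, smul_eq_mul]
      ring
    rwa [hneg, norm_neg]

lemma exists_isSlice_subset_forall_lt_norm_add (h : DaugavetProperty X) {S : Set X}
    (hS : IsSlice (closedBall 0 1) S) {v : X} (hv : ‖v‖ = 1) {ε : ℝ} (hε : 0 < ε) :
    ∃ S' ⊆ S, IsSlice (closedBall 0 1) S' ∧ ∀ y ∈ S', 2 - ε < ‖v + y‖ := by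
  obtain ⟨f, hf, c, hc, rfl⟩ := isSlice_closedBall_iff.1 hS
  have hf0 : 0 < ‖f‖ := norm_pos_iff.2 hf
  obtain ⟨e, he, hec, hef, heε⟩ : ∃ e > 0, e ≤ ‖f‖ - c ∧ e ≤ ‖f‖ ∧ (1 + ‖f‖) * e ≤ ‖f‖ * ε := by
    refine ⟨min (‖f‖ - c) (min ‖f‖ (‖f‖ * ε / (1 + ‖f‖))), ?_, min_le_left _ _,
      (min_le_right _ _).trans (min_le_left _ _), ?_⟩
    · have := sub_pos.2 hc
      positivity
    · rw [← le_div_iff₀' (by positivity)]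
      exact (min_le_right _ _).trans (min_le_right _ _)
  obtain ⟨g, hg, hgv, hlt⟩ :=
    h.exists_norm_le_one_lt_norm_add_smul f hv (sub_lt_self (1 + ‖f‖) he)
  refine ⟨{y ∈ closedBall 0 1 | 1 + ‖f‖ - e < (g + g v • f) y}, ?_,
    isSlice_closedBall_iff.2 ⟨_, norm_pos_iff.1 (by linarith), _, hlt, rfl⟩, ?_⟩
  · rintro y ⟨hy, hlty⟩
    have hfy := lt_apply_of_lt_add_smul_apply hg hv.le (mem_closedBall_zero_iff.1 hy) hef hgv hlty
    exact ⟨hy, by linarith⟩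
  · rintro y ⟨hy, hlty⟩
    have hvy := norm_mul_two_sub_norm_add_lt hg hv.le (mem_closedBall_zero_iff.1 hy) hgv hlty
    linarith [lt_of_mul_lt_mul_left (hvy.trans_le heε) hf0.le]

lemma exists_mem_isSlice_forall_lt_norm_add (h : DaugavetProperty X) {V : Set X} (hV : V.Finite)
    (hV1 : ∀ v ∈ V, ‖v‖ = 1) {S : Set X} (hS : IsSlice (closedBall 0 1) S) {ε : ℝ} (hε : 0 < ε) :
    ∃ y ∈ S, ∀ v ∈ V, 2 - ε < ‖v + y‖ := by
  induction V, hV using Set.Finite.induction_on generalizing S with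
  | empty =>
    obtain ⟨y, hy⟩ := hS.1
    exact ⟨y, hy, by simp⟩
  | @insert v V _ _ ih =>
    obtain ⟨S', hS'S, hS', hvS'⟩ :=
      h.exists_isSlice_subset_forall_lt_norm_add hS (hV1 v (mem_insert v V)) hε
    obtain ⟨y, hy, hVy⟩ := ih (fun w hw ↦ hV1 w (mem_insert_of_mem v hw)) hS'
    exact ⟨y, hS'S hy, forall_mem_insert.2 ⟨hvS' y hy, hVy⟩⟩

lemma exists_mem_isSlice_almostL1Orthogonal (h : DaugavetProperty X) (F : Submodule ℝ X)
    [FiniteDimensional ℝ F] (hF : F ≠ ⊥) {η : ℝ} (hη : 0 < η) {S : Set X}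
    (hS : IsSlice (closedBall 0 1) S) : ∃ y ∈ S, AlmostL1Orthogonal F η y := by
  obtain ⟨net, hnet1, hnet, hcover⟩ :=
    (isCompact_sphere (0 : F) 1).finite_cover_balls (half_pos hη)
  obtain ⟨y, hyS, hy⟩ := h.exists_mem_isSlice_forall_lt_norm_add (hnet.image F.subtype)
    (forall_mem_image.2 fun w hw ↦ by simpa using hnet1 hw) hS (half_pos hη)
  have hy1 : ‖y‖ ≤ 1 := by
    obtain ⟨f, -, c, -, rfl⟩ := isSlice_closedBall_iff.1 hS
    exact mem_closedBall_zero_iff.1 hyS.1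
  refine ⟨y, hyS, almostL1Orthogonal_of_forall_norm_eq_one hF hη.le hy1 fun u hu hu1 ↦ ?_⟩
  obtain ⟨w, hw, huw⟩ := mem_iUnion₂.1 (hcover (show ⟨u, hu⟩ ∈ sphere (0 : F) 1 by simpa using hu1))
  have hwu : ‖(w : X) - u‖ < η / 2 := by
    rw [← dist_eq_norm, dist_comm]; exact huw
  calc 2 - η ≤ ‖(w : X) + y‖ - ‖(w : X) - u‖ := by
        linarith [hy w (mem_image_of_mem F.subtype hw)]
    _ ≤ ‖(w + y) - (w - u)‖ := norm_sub_norm_le _ _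
    _ = ‖u + y‖ := by congr 1; abel

lemma closedBall_subset_closure_convexHull_almostL1Orthogonal (h : DaugavetProperty X)
    (F : Submodule ℝ X) [FiniteDimensional ℝ F] (hF : F ≠ ⊥) {η : ℝ} (hη : 0 < η) :
    closedBall 0 1 ⊆
      closure (convexHull ℝ {y : X | y ∈ closedBall 0 1 ∧ AlmostL1Orthogonal F η y}) := by
  have := h.nontrivial
  refine subset_closure_convexHull_of_forall_isSlice isBounded_closedBall fun S hS ↦ ?_
  obtain ⟨y, hyS, hy⟩ := h.exists_mem_isSlice_almostL1Orthogonal F hF hη hS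
  obtain ⟨f, -, c, -, rfl⟩ := isSlice_closedBall_iff.1 hS
  exact ⟨y, ⟨hyS.1, hy⟩, hyS⟩

end DaugavetProperty

section Blocks

variable {E : Type*} [SeminormedAddCommGroup E] [NormedSpace ℝ E]

lemma exists_injOn_forall_mem_Ioo {α : Type*} {W : Set α} (hW : W.Countable) {a b : ℝ}
    (hab : a < b) : ∃ r : α → ℝ, InjOn r W ∧ ∀ y, r y ∈ Ioo a b := by
  obtain ⟨g, hg⟩ := countable_iff_exists_injOn.1 hW
  let e := (Ioo_infinite hab).natEmbedding
  exact ⟨fun y ↦ e (g y), (Subtype.val_injective.comp e.injective).comp_injOn hg,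
    fun y ↦ (e (g y)).2⟩

lemma exists_injOn_norm_map_smul (q : X →ₗ[ℝ] E) {W : Set X} (hW : W.Countable) {a c : ℝ}
    (ha : 0 ≤ a) (hac : a < c) (hq : ∀ y ∈ W, ‖q y‖ ∈ Icc c 1) :
    ∃ θ : X → ℝ, InjOn (fun y ↦ ‖q (θ y • y)‖) W ∧
      ∀ y ∈ W, θ y ∈ Ioo a 1 ∧ ‖q (θ y • y)‖ ∈ Ioo a c := by
  obtain ⟨r, hrinj, hr⟩ := exists_injOn_forall_mem_Ioo hW hac
  have hqpos : ∀ y ∈ W, 0 < ‖q y‖ := fun y hy ↦ (ha.trans_lt hac).trans_le (hq y hy).1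
  have hnorm : ∀ y ∈ W, ‖q ((r y / ‖q y‖) • y)‖ = r y := by
    intro y hy
    rw [map_smul, norm_smul, Real.norm_of_nonneg (div_nonneg (ha.trans (hr y).1.le)
      (norm_nonneg _)), div_mul_cancel₀ _ (hqpos y hy).ne']
  refine ⟨fun y ↦ r y / ‖q y‖, hrinj.congr fun y hy ↦ (hnorm y hy).symm, fun y hy ↦ ?_⟩
  refine ⟨⟨?_, ?_⟩, (hnorm y hy).symm ▸ hr y⟩
  · rw [lt_div_iff₀ (hqpos y hy)]
    exact (mul_le_of_le_one_right ha (hq y hy).2).trans_lt (hr y).1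
  · rw [div_lt_one (hqpos y hy)]
    exact (hr y).2.trans_le (hq y hy).1

/-- A finite set `Y` in the unit ball, suitable as the next block after the finite set `T`: adding
multiples of a single `y ∈ Y` to `v ∈ span T` preserves at least the proportion `1 - δ` of `‖v‖`,
every functional is on `Y` up to `δ` as large as on `T ∪ -T`, and the norms modulo `S` of the
points of `Y` are distinct, `δ`-close to `1` and larger than those of the points of `T`. -/
structure IsBlock (S : Submodule ℝ X) (δ : ℝ) (T Y : Set X) : Prop where
  finite : Y.Finite
  norm_le_one : ∀ y ∈ Y, ‖y‖ ≤ 1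
  norm_mkQ_mem_Ioo : ∀ y ∈ Y, ‖S.mkQ y‖ ∈ Ioo (1 - δ) 1
  norm_mkQ_lt : ∀ t ∈ T, ∀ y ∈ Y, ‖S.mkQ t‖ < ‖S.mkQ y‖
  injOn_norm_mkQ : InjOn (fun y ↦ ‖S.mkQ y‖) Y
  one_sub_mul_norm_le : ∀ y ∈ Y, ∀ v ∈ span ℝ T, ∀ a : ℝ, (1 - δ) * ‖v‖ ≤ ‖v + a • y‖
  exists_abs_sub_le : ∀ t ∈ T, ∀ G : X →L[ℝ] ℝ, ∃ y ∈ Y, |G t| - δ * ‖G‖ ≤ G y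

lemma DaugavetProperty.exists_finite_almostL1Orthogonal (h : DaugavetProperty X)
    (F : Submodule ℝ X) [FiniteDimensional ℝ F] (hF : F ≠ ⊥) {T : Set X} (hT : T.Finite)
    (hT1 : ∀ t ∈ T, ‖t‖ ≤ 1) {η δ : ℝ} (hη : 0 < η) (hδ : 0 < δ) :
    ∃ W : Set X, W.Finite ∧ (∀ y ∈ W, ‖y‖ ≤ 1 ∧ AlmostL1Orthogonal F η y) ∧
      ∀ t ∈ T, ∀ G : X →L[ℝ] ℝ, ∃ y ∈ W, |G t| - δ * ‖G‖ ≤ G y := by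
  have hTball : T ∪ -T ⊆ closedBall 0 1 := by
    rintro t (ht | ht)
    · exact mem_closedBall_zero_iff.2 (hT1 t ht)
    · exact mem_closedBall_zero_iff.2 (norm_neg t ▸ hT1 (-t) ht)
  obtain ⟨W, hWD, hW, hle⟩ := exists_finite_subset_forall_le_of_subset_closure_convexHull
    (hT.union hT.neg)
    (hTball.trans (h.closedBall_subset_closure_convexHull_almostL1Orthogonal F hF hη)) hδ
  refine ⟨W, hW, fun y hy ↦ ⟨mem_closedBall_zero_iff.1 (hWD hy).1, (hWD hy).2⟩, fun t ht G ↦ ?_⟩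
  rcases abs_choice (G t) with habs | habs
  · rw [habs]
    exact hle t (Or.inl ht) G
  · rw [habs, ← map_neg]
    exact hle (-t) (Or.inr (neg_mem_neg.2 ht)) G

lemma exists_mem_Ioo_forall_lt {α : Type*} {T : Set α} (hT : T.Finite) {N : α → ℝ} {b c : ℝ}
    (hN : ∀ t ∈ T, N t < c) (hbc : b < c) : ∃ a ∈ Ioo b c, ∀ t ∈ T, N t < a := by
  have hev : ∀ᶠ a in 𝓝[<] c, ∀ t ∈ T, N t < a := (eventually_all_finite hT).2 fun t ht ↦
    (eventually_gt_nhds (hN t ht)).filter_mono nhdsWithin_le_nhds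
  exact (Filter.Eventually.and (Ioo_mem_nhdsLT hbc) hev).exists

lemma sub_mul_norm_le_apply_smul (G : X →L[ℝ] ℝ) {y : X} (hy : ‖y‖ ≤ 1) {κ θ : ℝ}
    (hκθ : 1 - κ ≤ θ) (hθ : θ ≤ 1) : G y - κ * ‖G‖ ≤ G (θ • y) := by
  have hloss : (1 - θ) * G y ≤ κ * ‖G‖ := by
    calc (1 - θ) * G y ≤ (1 - θ) * ‖G‖ :=
          mul_le_mul_of_nonneg_left (apply_le_norm G hy) (sub_nonneg.2 hθ)
      _ ≤ κ * ‖G‖ := by gcongr; linarith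
  rw [map_smul, smul_eq_mul]
  linarith

lemma DaugavetProperty.exists_isBlock (h : DaugavetProperty X) {S : Submodule ℝ X} {T : Set X}
    (hT : T.Finite) (hST : S ≤ span ℝ T) (hspan : span ℝ T ≠ ⊥) (hT1 : ∀ t ∈ T, ‖t‖ ≤ 1)
    (hTS : ∀ t ∈ T, ‖S.mkQ t‖ < 1) {δ : ℝ} (hδ : 0 < δ) (hδ1 : δ ≤ 1) :
    ∃ Y, IsBlock S δ T Y := by
  have := FiniteDimensional.span_of_finite ℝ hT
  obtain ⟨a, ⟨hδa, ha1⟩, hTa⟩ := exists_mem_Ioo_forall_lt hT hTS (b := 1 - δ / 2) (by linarith)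
  obtain ⟨W, hW, hWorth, hWle⟩ := h.exists_finite_almostL1Orthogonal (span ℝ T) hspan hT hT1
    (η := (1 - a) / 2) (δ := δ / 2) (by linarith) (by linarith)
  have hWS : ∀ y ∈ W, ‖S.mkQ y‖ ∈ Icc (1 - (1 - a) / 2) 1 := fun y hy ↦
    ⟨(hWorth y hy).2.one_sub_le_norm_mkQ (by linarith) hST,
      (Submodule.Quotient.norm_mk_le S y).trans (hWorth y hy).1⟩
  obtain ⟨θ, hθinj, hθ⟩ :=
    exists_injOn_norm_map_smul S.mkQ hW.countable (by linarith) (by linarith) hWS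
  exact ⟨(fun y ↦ θ y • y) '' W,
    { finite := hW.image _
      norm_le_one := forall_mem_image.2 fun y hy ↦ by
        obtain ⟨⟨haθ, hθ1⟩, -⟩ := hθ y hy
        rw [norm_smul, Real.norm_of_nonneg (by linarith)]
        exact mul_le_one₀ hθ1.le (norm_nonneg y) (hWorth y hy).1
      norm_mkQ_mem_Ioo := forall_mem_image.2 fun y hy ↦ by
        obtain ⟨-, hlower, hupper⟩ := hθ y hy
        exact ⟨by linarith, by linarith⟩
      norm_mkQ_lt := fun t ht ↦ forall_mem_image.2 fun y hy ↦ (hTa t ht).trans (hθ y hy).2.1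
      injOn_norm_mkQ := InjOn.image_of_comp (g := fun y ↦ ‖S.mkQ y‖) hθinj
      one_sub_mul_norm_le := forall_mem_image.2 fun y hy v hv b ↦ by
        calc (1 - δ) * ‖v‖ ≤ (1 - (1 - a) / 2) * ‖v‖ := by gcongr; linarith
          _ ≤ ‖v + (b * θ y) • y‖ := (hWorth y hy).2.one_sub_mul_norm_le (by linarith) hv _
          _ = ‖v + b • θ y • y‖ := by rw [mul_smul]
      exists_abs_sub_le := fun t ht G ↦ by
        obtain ⟨y, hy, hGy⟩ := hWle t ht G
        obtain ⟨⟨haθ, hθ1⟩, -⟩ := hθ y hy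
        refine ⟨_, mem_image_of_mem _ hy, ?_⟩
        linarith [sub_mul_norm_le_apply_smul G (hWorth y hy).1 (hδa.trans haθ).le hθ1.le] }⟩

end Blocks

section Towers

/-- Finite sets `T 0 ⊆ T 1 ⊆ ⋯` and blocks `Y k` over them, with `z ∈ T 0` and `Y k ⊆ T (k + 1)`.
The errors `(1 / 2) ^ (k + 2)` are chosen to have sum `1 / 2`. -/
structure IsTower (z : X) (T Y : ℕ → Set X) : Prop where
  mem_zero : z ∈ T 0
  finite : ∀ k, (T k).Finite
  union_subset_succ : ∀ k, T k ∪ Y k ⊆ T (k + 1)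
  isBlock : ∀ k, IsBlock (ℝ ∙ z) ((1 / 2) ^ (k + 2)) (T k) (Y k)

lemma one_half_pow_add_two_le (k : ℕ) : (1 / 2 : ℝ) ^ (k + 2) ≤ 1 / 4 := by
  calc (1 / 2 : ℝ) ^ (k + 2) ≤ (1 / 2) ^ 2 :=
        pow_le_pow_of_le_one (by norm_num) (by norm_num) (Nat.le_add_left 2 k)
    _ = 1 / 4 := by norm_num

lemma DaugavetProperty.exists_isTower (h : DaugavetProperty X) {z : X} (hz : ‖z‖ = 1) :
    ∃ T Y : ℕ → Set X, IsTower z T Y := by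
  let Admissible (T : Set X) : Prop :=
    T.Finite ∧ z ∈ T ∧ ∀ t ∈ T, ‖t‖ ≤ 1 ∧ ‖(ℝ ∙ z).mkQ t‖ < 1
  have hblock : ∀ (k : ℕ) (T : Set X), Admissible T →
      ∃ Y, IsBlock (ℝ ∙ z) ((1 / 2) ^ (k + 2)) T Y := by
    rintro k T ⟨hT, hzT, hT1⟩
    have hz0 : z ≠ 0 := norm_ne_zero_iff.1 (by rw [hz]; exact one_ne_zero)
    exact h.exists_isBlock hT (span_mono (singleton_subset_iff.2 hzT))
      ((Submodule.ne_bot_iff _).2 ⟨z, subset_span hzT, hz0⟩) (fun t ht ↦ (hT1 t ht).1)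
      (fun t ht ↦ (hT1 t ht).2) (by positivity)
      ((one_half_pow_add_two_le k).trans (by norm_num))
  choose! next hnext using hblock
  let T : ℕ → Set X := fun k ↦ Nat.rec {z} (fun k T ↦ T ∪ next k T) k
  have hT : ∀ k, Admissible (T k) := by
    intro k
    induction k with
    | zero =>
      have hzq : (ℝ ∙ z).mkQ z = 0 := by simp
      exact ⟨finite_singleton z, rfl, by
        rintro t (rfl : t = z)
        rw [hzq, norm_zero]
        exact ⟨hz.le, one_pos⟩⟩
    | succ k ih =>
      have hY := hnext k (T k) ih
      exact ⟨ih.1.union hY.finite, Or.inl ih.2.1, fun t ht ↦ ht.elim (ih.2.2 t) fun ht ↦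
        ⟨hY.norm_le_one t ht, (hY.norm_mkQ_mem_Ioo t ht).2⟩⟩
  exact ⟨T, fun k ↦ next k (T k), rfl, fun k ↦ (hT k).1, fun k ↦ subset_rfl,
    fun k ↦ hnext k (T k) (hT k)⟩

namespace IsTower

variable {z : X} {T Y : ℕ → Set X}

lemma monotone (H : IsTower z T Y) : Monotone T :=
  monotone_nat_of_le_succ fun k ↦ subset_union_left.trans (H.union_subset_succ k)

lemma subset_of_lt (H : IsTower z T Y) {j k : ℕ} (hjk : j < k) : Y j ⊆ T k :=
  (subset_union_right.trans (H.union_subset_succ j)).trans (H.monotone hjk)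

lemma block_nonempty (H : IsTower z T Y) (k : ℕ) : (Y k).Nonempty := by
  obtain ⟨y, hy, -⟩ := (H.isBlock k).exists_abs_sub_le z (H.monotone (Nat.zero_le k) H.mem_zero) 0
  exact ⟨y, hy⟩

lemma norm_mkQ_pos (H : IsTower z T Y) {k : ℕ} {y : X} (hy : y ∈ Y k) :
    0 < ‖(ℝ ∙ z).mkQ y‖ := by
  linarith [((H.isBlock k).norm_mkQ_mem_Ioo y hy).1, one_half_pow_add_two_le k]

lemma norm_mkQ_lt_of_lt (H : IsTower z T Y) {j k : ℕ} (hjk : j < k) {x y : X} (hx : x ∈ Y j)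
    (hy : y ∈ Y k) : ‖(ℝ ∙ z).mkQ x‖ < ‖(ℝ ∙ z).mkQ y‖ :=
  (H.isBlock k).norm_mkQ_lt x (H.subset_of_lt hjk hx) y hy

lemma injOn_norm_mkQ (H : IsTower z T Y) : InjOn (fun y ↦ ‖(ℝ ∙ z).mkQ y‖) (⋃ k, Y k) := by
  intro x hx y hy hxy
  obtain ⟨j, hj⟩ := mem_iUnion.1 hx
  obtain ⟨k, hk⟩ := mem_iUnion.1 hy
  rcases lt_trichotomy j k with hjk | rfl | hkj
  · exact absurd hxy (H.norm_mkQ_lt_of_lt hjk hj hk).ne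
  · exact (H.isBlock j).injOn_norm_mkQ hj hk hxy
  · exact absurd hxy (H.norm_mkQ_lt_of_lt hkj hk hj).ne'

lemma exists_forall_abs_norm_mkQ_sub_lt_imp_eq (H : IsTower z T Y) {x : X} (hx : x ∈ ⋃ k, Y k) :
    ∃ ε > 0, ∀ y ∈ ⋃ k, Y k, |‖(ℝ ∙ z).mkQ y‖ - ‖(ℝ ∙ z).mkQ x‖| < ε → y = x := by
  obtain ⟨k, hk⟩ := mem_iUnion.1 hx
  obtain ⟨x', hx'⟩ := H.block_nonempty (k + 1)
  have hgap := sub_pos.2 (H.norm_mkQ_lt_of_lt k.lt_succ_self hk hx')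
  have hfinite : ∀ᶠ ε in 𝓝[>] (0 : ℝ), ∀ y ∈ T (k + 2),
      ‖(ℝ ∙ z).mkQ y‖ ≠ ‖(ℝ ∙ z).mkQ x‖ → ε < |‖(ℝ ∙ z).mkQ y‖ - ‖(ℝ ∙ z).mkQ x‖| := by
    refine ((eventually_all_finite (H.finite _)).2 fun y _ ↦ ?_).filter_mono nhdsWithin_le_nhds
    exact eventually_imp_distrib_left.2 fun hne ↦ eventually_lt_nhds (abs_sub_pos.2 hne)
  obtain ⟨ε, hε, hεgap, hεT⟩ := (eventually_mem_nhdsWithin.and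
    (((eventually_lt_nhds hgap).filter_mono nhdsWithin_le_nhds).and hfinite)).exists
  refine ⟨ε, hε, fun y hy hyε ↦ ?_⟩
  obtain ⟨j, hj⟩ := mem_iUnion.1 hy
  rcases lt_or_ge j (k + 2) with hjk | hkj
  · refine H.injOn_norm_mkQ hy hx (by_contra fun hne ↦ ?_)
    exact (hεT y (H.subset_of_lt hjk hj) hne).asymm hyε
  · linarith [H.norm_mkQ_lt_of_lt hkj hx' hj, (abs_lt.1 hyε).2]

end IsTower

end Towers

section BasicSequences

variable {F : ℕ → Submodule ℝ X} {δ : ℕ → ℝ} {y : ℕ → X}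

lemma one_sub_sum_mul_norm_le_norm_add_sum (hF : Monotone F) (hyF : ∀ n, y n ∈ F (n + 1))
    (hδ0 : ∀ n, 0 ≤ δ n) (hδ1 : ∀ n, δ n ≤ 1)
    (hle : ∀ n, ∀ v ∈ F n, ∀ a : ℝ, (1 - δ n) * ‖v‖ ≤ ‖v + a • y n‖) {v : X} (hv : v ∈ F 0)
    (a : ℕ → ℝ) (n : ℕ) :
    (1 - ∑ i ∈ Finset.range n, δ i) * ‖v‖ ≤ ‖v + ∑ i ∈ Finset.range n, a i • y i‖ := by
  induction n with
  | zero => simp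
  | succ n ih =>
    have hmem : v + ∑ i ∈ Finset.range n, a i • y i ∈ F n :=
      (F n).add_mem (hF n.zero_le hv) (sum_mem fun i hi ↦
        (F n).smul_mem _ (hF (Nat.succ_le_of_lt (Finset.mem_range.1 hi)) (hyF i)))
    have hprod : 0 ≤ δ n * ((∑ i ∈ Finset.range n, δ i) * ‖v‖) :=
      mul_nonneg (hδ0 n) (mul_nonneg (Finset.sum_nonneg fun i _ ↦ hδ0 i) (norm_nonneg v))
    rw [Finset.sum_range_succ, Finset.sum_range_succ, ← add_assoc]
    calc (1 - (∑ i ∈ Finset.range n, δ i + δ n)) * ‖v‖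
        ≤ (1 - δ n) * ((1 - ∑ i ∈ Finset.range n, δ i) * ‖v‖) := by linarith
      _ ≤ (1 - δ n) * ‖v + ∑ i ∈ Finset.range n, a i • y i‖ :=
        mul_le_mul_of_nonneg_left ih (sub_nonneg.2 (hδ1 n))
      _ ≤ ‖v + ∑ i ∈ Finset.range n, a i • y i + a n • y n‖ := hle n _ hmem _

lemma exists_eq_sum_range_of_mem_span_range {u : X} (hu : u ∈ span ℝ (range y)) :
    ∃ (n : ℕ) (a : ℕ → ℝ), u = ∑ i ∈ Finset.range n, a i • y i := by
  obtain ⟨c, rfl⟩ := Finsupp.mem_span_range_iff_exists_finsupp.1 hu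
  exact ⟨_, c, Finsupp.sum_of_support_subset c c.support.subset_range_sup_succ _
    fun i _ ↦ zero_smul ℝ (y i)⟩

lemma IsTower.half_norm_le_norm_add {z : X} {T Y : ℕ → Set X} (H : IsTower z T Y) {ψ : ℕ → ℕ}
    (hψ : StrictMono ψ) (hy : ∀ n, y n ∈ Y (ψ n)) {v u : X} (hv : v ∈ span ℝ (T (ψ 0)))
    (hu : u ∈ span ℝ (range y)) : ‖v‖ / 2 ≤ ‖v + u‖ := by
  obtain ⟨n, a, rfl⟩ := exists_eq_sum_range_of_mem_span_range hu
  have hle : ∀ n, ∀ v ∈ span ℝ (T (ψ n)), ∀ a : ℝ,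
      (1 - (1 / 2) ^ (n + 2)) * ‖v‖ ≤ ‖v + a • y n‖ := by
    intro n v hv a
    refine le_trans ?_ ((H.isBlock (ψ n)).one_sub_mul_norm_le (y n) (hy n) v hv a)
    gcongr (1 - ?_) * ‖v‖
    exact pow_le_pow_of_le_one (by norm_num) (by norm_num) (by gcongr; exact hψ.le_apply)
  have hsum : ∑ i ∈ Finset.range n, (1 / 2 : ℝ) ^ (i + 2) ≤ 1 / 2 := by
    simp only [pow_add, ← Finset.sum_mul]
    linarith [sum_geometric_two_le n]
  calc ‖v‖ / 2 ≤ (1 - ∑ i ∈ Finset.range n, (1 / 2 : ℝ) ^ (i + 2)) * ‖v‖ := by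
        nlinarith [norm_nonneg v]
    _ ≤ ‖v + ∑ i ∈ Finset.range n, a i • y i‖ :=
      one_sub_sum_mul_norm_le_norm_add_sum
        (fun i j hij ↦ span_mono (H.monotone (hψ.monotone hij)))
        (fun i ↦ subset_span (H.subset_of_lt (hψ i.lt_succ_self) (hy i)))
        (fun i ↦ by positivity) (fun i ↦ (one_half_pow_add_two_le i).trans (by norm_num))
        hle hv a n

lemma IsTower.notMem_closure_span_insert_range {z : X} {T Y : ℕ → Set X} (H : IsTower z T Y)
    {ψ : ℕ → ℕ} (hψ : StrictMono ψ) (hy : ∀ n, y n ∈ Y (ψ n)) {x : X}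
    (hx : x ∈ span ℝ (T (ψ 0))) (hx0 : 0 < ‖(ℝ ∙ z).mkQ x‖) :
    x ∉ closure (span ℝ (insert z (range y)) : Set X) := by
  intro hcl
  obtain ⟨w, hw, hxw⟩ := Metric.mem_closure_iff.1 hcl _ (half_pos hx0)
  obtain ⟨c, u, hu, rfl⟩ := mem_span_insert.1 hw
  have hzT : z ∈ span ℝ (T (ψ 0)) := subset_span (H.monotone (Nat.zero_le _) H.mem_zero)
  have hqx : (ℝ ∙ z).mkQ (x - c • z) = (ℝ ∙ z).mkQ x := by simp
  refine hxw.not_ge ?_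
  calc ‖(ℝ ∙ z).mkQ x‖ / 2 ≤ ‖x - c • z‖ / 2 := by
        rw [← hqx]; gcongr; exact Submodule.Quotient.norm_mk_le _ _
    _ ≤ ‖(x - c • z) + -u‖ :=
      H.half_norm_le_norm_add hψ hy (sub_mem hx (smul_mem _ c hzT)) (neg_mem hu)
    _ = dist x (c • z + u) := by rw [dist_eq_norm]; congr 1; abel

end BasicSequences

section ParaboloidLift

/-- Moves `y` along `z` so that, when `f z = 1`, the value of `f` becomes the square of the norm
of `y` modulo `z`. The lifted points thus lie on a paraboloid over `X ⧸ ℝ ∙ z`. -/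
noncomputable def paraboloidLift (f : X →L[ℝ] ℝ) (z y : X) : X :=
  y + (‖(ℝ ∙ z).mkQ y‖ ^ 2 - f y) • z

variable {f : X →L[ℝ] ℝ} {z : X} {T Y : ℕ → Set X}

lemma mkQ_paraboloidLift (f : X →L[ℝ] ℝ) (z y : X) :
    (ℝ ∙ z).mkQ (paraboloidLift f z y) = (ℝ ∙ z).mkQ y := by
  simp [paraboloidLift]

lemma apply_paraboloidLift (f G : X →L[ℝ] ℝ) (z y : X) :
    G (paraboloidLift f z y) = (G - G z • f) y + ‖(ℝ ∙ z).mkQ y‖ ^ 2 * G z := by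
  simp only [paraboloidLift, map_add, map_smul, smul_eq_mul, sub_apply, smul_apply]
  ring

lemma norm_paraboloidLift_le (f : X →L[ℝ] ℝ) (z : X) {y : X} (hy : ‖y‖ ≤ 1) :
    ‖paraboloidLift f z y‖ ≤ 1 + (1 + ‖f‖) * ‖z‖ := by
  have hqy : ‖(ℝ ∙ z).mkQ y‖ ^ 2 ≤ 1 :=
    pow_le_one₀ (norm_nonneg _) ((Submodule.Quotient.norm_mk_le _ y).trans hy)
  calc ‖paraboloidLift f z y‖ ≤ ‖y‖ + |‖(ℝ ∙ z).mkQ y‖ ^ 2 - f y| * ‖z‖ := by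
        rw [← Real.norm_eq_abs, ← norm_smul]; exact norm_add_le _ _
    _ ≤ 1 + (1 + ‖f‖) * ‖z‖ := by
      gcongr
      refine (abs_sub _ _).trans (add_le_add ?_ (f.unit_le_opNorm y hy))
      rwa [abs_of_nonneg (by positivity)]

lemma IsTower.isBounded_image_paraboloidLift (H : IsTower z T Y) (f : X →L[ℝ] ℝ) :
    IsBounded (paraboloidLift f z '' ⋃ k, Y k) := by
  refine isBounded_iff_forall_norm_le.2
    ⟨1 + (1 + ‖f‖) * ‖z‖, forall_mem_image.2 fun y hy ↦ ?_⟩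
  obtain ⟨k, hk⟩ := mem_iUnion.1 hy
  exact norm_paraboloidLift_le f z ((H.isBlock k).norm_le_one y hk)

lemma IsTower.isSCD_image_paraboloidLift (H : IsTower z T Y) (hfz : f z = 1) :
    IsSCD (paraboloidLift f z '' ⋃ k, Y k) := by
  obtain ⟨y, hy⟩ := H.block_nonempty 0
  refine isSCD_of_forall_isSlice_singleton ⟨_, mem_image_of_mem _ (mem_iUnion_of_mem 0 hy)⟩
    ((countable_iUnion fun k ↦ (H.isBlock k).finite.countable).image _)
    (forall_mem_image.2 fun x hx ↦ ?_)
  obtain ⟨k, hk⟩ := mem_iUnion.1 hx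
  obtain ⟨ε, hε, hisol⟩ := H.exists_forall_abs_norm_mkQ_sub_lt_imp_eq hx
  refine isSlice_singleton_of_eq_norm_sq f (ℝ ∙ z).mkQL (forall_mem_image.2 fun y _ ↦ ?_)
    (mem_image_of_mem _ hx) ?_ hε (forall_mem_image.2 fun y hy hyε ↦ ?_)
  · rw [coe_mkQL, mkQ_paraboloidLift, apply_paraboloidLift, hfz, one_smul, sub_self, zero_apply,
      zero_add, mul_one]
  · rw [coe_mkQL, mkQ_paraboloidLift]
    exact H.norm_mkQ_pos hk
  · rw [coe_mkQL, mkQ_paraboloidLift, mkQ_paraboloidLift] at hyε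
    exact congrArg _ (hisol y hy hyε)

/-- The set of all points `±paraboloidLift f z y` with `y` in the block `Y`. -/
def symmLift (f : X →L[ℝ] ℝ) (z : X) (Y : Set X) : Set X :=
  paraboloidLift f z '' Y ∪ -(paraboloidLift f z '' Y)

lemma neg_symmLift (f : X →L[ℝ] ℝ) (z : X) (Y : Set X) : -symmLift f z Y = symmLift f z Y := by
  rw [symmLift, union_neg, neg_neg, union_comm]

lemma IsBlock.exists_mem_symmLift_abs_apply_sub_le {δ : ℝ} {T Y : Set X}
    (hY : IsBlock (ℝ ∙ z) δ T Y) (f G : X →L[ℝ] ℝ) {t : X} (ht : t ∈ T) :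
    ∃ x ∈ symmLift f z Y,
      |G (paraboloidLift f z t)| - δ * (‖G - G z • f‖ + 2 * |G z|) ≤ G x := by
  wlog hGz : 0 ≤ G z generalizing G
  · obtain ⟨x, hx, hle⟩ := this (-G) (by simpa using (not_le.1 hGz).le)
    refine ⟨-x, neg_symmLift f z Y ▸ neg_mem_neg.2 hx, ?_⟩
    have hnorm : -G - (-G) z • f = -(G - G z • f) := by
      ext w
      simp only [sub_apply, neg_apply, smul_apply, smul_eq_mul]
      ring
    rwa [hnorm, norm_neg, neg_apply, neg_apply, neg_apply, abs_neg, abs_neg, ← map_neg G x] at hle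
  obtain ⟨y, hy, hle⟩ := hY.exists_abs_sub_le t ht (G - G z • f)
  have hqy := hY.norm_mkQ_mem_Ioo y hy
  have hqt : ‖(ℝ ∙ z).mkQ t‖ ^ 2 ≤ 1 :=
    pow_le_one₀ (norm_nonneg _) ((hY.norm_mkQ_lt t ht y hy).trans hqy.2).le
  have hlift_t : |G (paraboloidLift f z t)| ≤ |(G - G z • f) t| + G z := by
    rw [apply_paraboloidLift]
    refine (abs_add_le _ _).trans (add_le_add_right ?_ _)
    rw [abs_of_nonneg (by positivity)]
    exact mul_le_of_le_one_left hGz hqt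
  have hlift_y : (1 - 2 * δ) * G z ≤ ‖(ℝ ∙ z).mkQ y‖ ^ 2 * G z := by
    gcongr
    nlinarith [hqy.1, sq_nonneg (1 - ‖(ℝ ∙ z).mkQ y‖)]
  refine ⟨_, Or.inl (mem_image_of_mem _ hy), ?_⟩
  rw [abs_of_nonneg hGz, apply_paraboloidLift f G z y]
  linarith

lemma symmLift_mono (f : X →L[ℝ] ℝ) (z : X) {Y Y' : Set X} (hYY' : Y ⊆ Y') :
    symmLift f z Y ⊆ symmLift f z Y' :=
  union_subset_union (image_mono hYY') (neg_subset_neg.2 (image_mono hYY'))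

lemma exists_apply_le_abs_of_mem_symmLift (G : X →L[ℝ] ℝ) {Y : Set X} {x : X}
    (hx : x ∈ symmLift f z Y) : ∃ y ∈ Y, G x ≤ |G (paraboloidLift f z y)| := by
  rcases hx with ⟨y, hy, rfl⟩ | ⟨y, hy, hyx⟩
  · exact ⟨y, hy, le_abs_self _⟩
  · exact ⟨y, hy, by rw [hyx, map_neg, abs_neg]; exact le_abs_self _⟩

lemma IsTower.eventually_symmLift_inter_nonempty (H : IsTower z T Y) {S : Set X}
    (hS : IsSlice (symmLift f z (⋃ k, Y k)) S) :
    ∀ᶠ k in atTop, (symmLift f z (Y k) ∩ S).Nonempty := by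
  obtain ⟨hne, G, -, ε, -, rfl⟩ := hS
  obtain ⟨x, hx, hltx⟩ := hne
  obtain ⟨t, ht, hxt⟩ := exists_apply_le_abs_of_mem_symmLift G hx
  obtain ⟨j, hj⟩ := mem_iUnion.1 ht
  have hlim : Tendsto (fun k ↦ (1 / 2 : ℝ) ^ (k + 2) * (‖G - G z • f‖ + 2 * |G z|))
      atTop (𝓝 0) := by
    have hpow : Tendsto (fun k ↦ (1 / 2 : ℝ) ^ (k + 2)) atTop (𝓝 0) :=
      (tendsto_add_atTop_iff_nat 2).2
        (tendsto_pow_atTop_nhds_zero_of_lt_one (by norm_num) (by norm_num))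
    simpa only [zero_mul] using hpow.mul_const (‖G - G z • f‖ + 2 * |G z|)
  filter_upwards [hlim.eventually_lt_const (sub_pos.2 (hltx.trans_le hxt)),
    eventually_gt_atTop j] with k hk hjk
  obtain ⟨x', hx', hle⟩ :=
    (H.isBlock k).exists_mem_symmLift_abs_apply_sub_le f G (H.subset_of_lt hjk hj)
  exact ⟨x', hx', symmLift_mono f z (subset_iUnion Y k) hx', by linarith⟩

lemma symmLift_subset_submodule {K : Submodule ℝ X} (f : X →L[ℝ] ℝ) {Y : Set X} (hz : z ∈ K)
    (hY : Y ⊆ K) : symmLift f z Y ⊆ K := by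
  have himage : paraboloidLift f z '' Y ⊆ K :=
    image_subset_iff.2 fun y hy ↦ K.add_mem (hY hy) (K.smul_mem _ hz)
  exact union_subset himage fun x hx ↦ neg_mem_iff.1 (himage hx)

lemma exists_mem_symmLift_singleton {Y : Set X} {x : X} (hx : x ∈ symmLift f z Y) :
    ∃ y ∈ Y, x ∈ symmLift f z {y} := by
  rcases hx with ⟨y, hy, hyx⟩ | ⟨y, hy, hyx⟩
  · exact ⟨y, hy, Or.inl ⟨y, rfl, hyx⟩⟩
  · exact ⟨y, hy, Or.inr ⟨y, rfl, hyx⟩⟩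

lemma IsTower.not_isSCD_symmLift (H : IsTower z T Y) (f : X →L[ℝ] ℝ) :
    ¬ IsSCD (symmLift f z (⋃ k, Y k)) := by
  refine not_isSCD_of_forall_frequently_inter_nonempty (D := fun k ↦ symmLift f z (Y (k + 1)))
    (fun S hS ↦ ((tendsto_add_atTop_nat 1).eventually
      (H.eventually_symmLift_inter_nonempty hS)).frequently) fun φ hφ d hd hsub ↦ ?_
  choose y hyY hdy using fun n ↦ exists_mem_symmLift_singleton (hd n)
  let K : Submodule ℝ X := span ℝ (insert z (range y))
  have hdK : closure (convexHull ℝ (range d)) ⊆ closure K := by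
    refine closure_mono (convexHull_min (range_subset_iff.2 fun n ↦ ?_) K.convex)
    exact symmLift_subset_submodule f (subset_span (mem_insert z _))
      (singleton_subset_iff.2 (subset_span (mem_insert_of_mem z (mem_range_self n)))) (hdy n)
  obtain ⟨y₀, hy₀⟩ := H.block_nonempty 0
  have hlift : paraboloidLift f z y₀ ∈ symmLift f z (Y 0) := Or.inl (mem_image_of_mem _ hy₀)
  refine H.notMem_closure_span_insert_range (hφ.add_const 1) hyY ?_ ?_
    (hdK (hsub (symmLift_mono f z (subset_iUnion Y 0) hlift)))
  · exact symmLift_subset_submodule f (subset_span (H.monotone (Nat.zero_le _) H.mem_zero))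
      ((H.subset_of_lt (φ 0).succ_pos).trans subset_span) hlift
  · rw [mkQ_paraboloidLift]
    exact H.norm_mkQ_pos hy₀

end ParaboloidLift

theorem exists_scd_set_union_neg_not_scd_general {X : Type*} [NormedAddCommGroup X]
    [NormedSpace ℝ X] (h : DaugavetProperty X) :
    ∃ B : Set X, IsBounded B ∧ IsSCD B ∧ ¬ IsSCD (B ∪ -B) := by
  have := h.nontrivial
  obtain ⟨z, hz⟩ := NormedSpace.sphere_nonempty (x := (0 : X)).2 zero_le_one
  rw [mem_sphere_zero_iff_norm] at hz
  obtain ⟨f, -, hfz⟩ := exists_dual_vector'' ℝ z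
  obtain ⟨T, Y, H⟩ := h.exists_isTower hz
  exact ⟨paraboloidLift f z '' ⋃ k, Y k, H.isBounded_image_paraboloidLift f,
    H.isSCD_image_paraboloidLift (by simpa [hz] using hfz), H.not_isSCD_symmLift f⟩

theorem exists_scd_set_union_neg_not_scd
    {X : Type*} [NormedAddCommGroup X] [NormedSpace ℝ X] [CompleteSpace X]
    (h : DaugavetProperty X) :
    ∃ B : Set X, IsBounded B ∧ IsSCD B ∧ ¬ IsSCD (B ∪ -B) :=
  exists_scd_set_union_neg_not_scd_general h
end
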